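/- arXiv:math/0606092 — 2 statements merged into one kernel-verified Lean document; each statement's English description precedes it below -/
import Mathlib

section
/- Let 0 ≤ q ≤ 1, η > 0, θ ≥ 0, τ ≥ 0 and fix t > 0. Let μ_t be a probability measure on ℝ with finite moments of all orders such that ∫ p_m(y;t) p_n(y;t) μ_t(dy) = 0 whenever m ≠ n. Then the support of μ_t is contained in [−1/η, ∞); that is, μ_t((−∞, −1/η)) = 0. -/
/-- `[n]_q = 1 + q + ⋯ + q^{n-1}`. -/
noncomputable def qnum (q : ℝ) (n : ℕ) : ℝ := ∑ i ∈ Finset.range n, q ^ i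

/-- `[n]_q! = [1]_q [2]_q ⋯ [n]_q`. -/
noncomputable def qfact (q : ℝ) (n : ℕ) : ℝ := ∏ i ∈ Finset.range n, qnum q (i + 1)

/-- q-binomial coefficient `[n choose k]_q`, with the convention that it is `0` for `k > n`. -/
noncomputable def qbinom (q : ℝ) (n k : ℕ) : ℝ :=
  if k ≤ n then qfact q n / (qfact q (n - k) * qfact q k) else 0

/-- `a_n = η⁻¹ + θ[n]_q + [n]_q² ητ`. -/
noncomputable def aCoef (η θ τ q : ℝ) (n : ℕ) : ℝ :=
  η⁻¹ + θ * qnum q n + (qnum q n) ^ 2 * η * τ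

/-- `b_n(t) = (tη + θ + ([n]_q + [n-1]_q)ητ)[n]_q`. -/
noncomputable def bCoef (η θ τ q t : ℝ) (n : ℕ) : ℝ :=
  (t * η + θ + (qnum q n + qnum q (n - 1)) * η * τ) * qnum q n

/-- `c_n(t) = η(t + τ[n-1]_q)[n]_q`. -/
noncomputable def cCoef (η τ q t : ℝ) (n : ℕ) : ℝ :=
  η * (t + τ * qnum q (n - 1)) * qnum q n

/-- `A_n(x,s) = a_n + q^n x - sη q^n [n]_q`. -/
noncomputable def ACoef (η θ τ q x s : ℝ) (n : ℕ) : ℝ :=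
  aCoef η θ τ q n + q ^ n * x - s * η * q ^ n * qnum q n

/-- `x_k(s) = ((sη q^k - θ)[k]_q - η⁻¹ - ητ[k]_q²)/q^k`, the zero of `x ↦ A_k(x,s)`. -/
noncomputable def xPt (η θ τ q s : ℝ) (k : ℕ) : ℝ :=
  ((s * η * q ^ k - θ) * qnum q k - η⁻¹ - η * τ * (qnum q k) ^ 2) / q ^ k

open MeasureTheory

/-! Since `a_n + c_n - b_n = η⁻¹`, the recursion says that the `p_n` are birth-and-death polynomials
in the variable `y + η⁻¹`: `(y + η⁻¹) p_n = a_n (p_{n+1} + p_n) + c_n (p_n + p_{n-1})`. With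
`π_n = ∏_{k<n} a_k / c_{k+1}`, the sums `Q_n = ∑_{k≤n} (-1)^k π_k p_k` satisfy
`(y + η⁻¹) Q_n = (-1)^n π_n a_n (p_{n+1} + p_n)`, which has two consequences.

* The `Q_n` are orthogonal for the weight `y + η⁻¹` with positive norms, so `∫ (y + η⁻¹) f² dμ ≥ 0`
  for every polynomial `f`.
* For `w < -η⁻¹` the numbers `(-1)^n p_n(w)` grow so fast that `∑ π_n p_n(w)²` diverges, because
  `c_n = O(n²)`. Hence some polynomials `f` with `f(w) = 1` have arbitrarily small `∫ f² dμ`.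

Write such an `f` as `1 - (y - w) g`. The first point bounds `‖g‖` in `L²(μ)` by
`‖1 - f‖ / (-η⁻¹ - w)`, and on the ball of radius `r` around `w` one has `1 ≤ |f| + r |g|`. Letting
`‖f‖ → 0`, the ball has mass at most a constant times `r²`, and a measure on an interval which is
quadratically small on all balls vanishes there. -/

open Polynomial

section OrthogonalFamily

variable {𝕜 A ι : Type*} [CommRing 𝕜] [Semiring A] [Algebra 𝕜 A] {L : A →ₗ[𝕜] 𝕜} {Q : ι → A}

lemma map_sum_smul_mul_of_orthogonal [DecidableEq ι]
    (horth : Pairwise fun i j => L (Q i * Q j) = 0) (s : Finset ι) (u : ι → 𝕜) (j : ι) :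
    L ((∑ i ∈ s, u i • Q i) * Q j) = if j ∈ s then u j * L (Q j * Q j) else 0 := by
  simp only [Finset.sum_mul, map_sum, smul_mul_assoc, map_smul, smul_eq_mul]
  rw [← Finset.sum_ite_eq s j fun i => u i * L (Q i * Q i)]
  refine Finset.sum_congr rfl fun i _ => ?_
  split_ifs with hij
  · rw [hij]
  · rw [horth (Ne.symm hij), mul_zero]

lemma map_sum_smul_mul_self_of_orthogonal
    (horth : Pairwise fun i j => L (Q i * Q j) = 0) (s : Finset ι) (u : ι → 𝕜) :
    L ((∑ i ∈ s, u i • Q i) * ∑ i ∈ s, u i • Q i) = ∑ i ∈ s, u i ^ 2 * L (Q i * Q i) := by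
  classical
  rw [Finset.mul_sum, map_sum]
  refine Finset.sum_congr rfl fun j hj => ?_
  rw [mul_smul_comm, map_smul, map_sum_smul_mul_of_orthogonal horth, if_pos hj, smul_eq_mul]
  ring

lemma map_mul_self_nonneg_of_mem_span [LinearOrder 𝕜] [IsStrictOrderedRing 𝕜]
    (horth : Pairwise fun i j => L (Q i * Q j) = 0) (hnonneg : ∀ i, 0 ≤ L (Q i * Q i))
    {f : A} (hf : f ∈ Submodule.span 𝕜 (Set.range Q)) : 0 ≤ L (f * f) := by
  obtain ⟨u, rfl⟩ := Finsupp.mem_span_range_iff_exists_finsupp.1 hf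
  rw [Finsupp.sum, map_sum_smul_mul_self_of_orthogonal horth]
  exact Finset.sum_nonneg fun i _ => mul_nonneg (sq_nonneg _) (hnonneg i)

end OrthogonalFamily

lemma submodule_eq_top_of_one_mem_of_X_mul_mem {R : Type*} [CommSemiring R] {S : Submodule R R[X]}
    (hone : 1 ∈ S) (hX : ∀ f ∈ S, X * f ∈ S) : S = ⊤ := by
  have hpow (n : ℕ) : (X ^ n : R[X]) ∈ S := by
    induction n with
    | zero => rwa [pow_zero]
    | succ n ih => rw [pow_succ']; exact hX _ ih
  refine Submodule.eq_top_iff'.2 fun f => ?_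
  rw [f.as_sum_range_C_mul_X_pow]
  refine Submodule.sum_mem _ fun i _ => ?_
  rw [← smul_eq_C_mul]
  exact S.smul_mem _ (hpow i)

section BirthDeath

variable {𝕜 : Type*} [Field 𝕜]

/-- The birth-and-death polynomials of Karlin and McGregor with birth rates `a n` and death rates
`d n`, in the variable `X + β` and with alternating signs: `P 0 = 1` and
`(X + β) P n = a n (P (n + 1) + P n) + d (n - 1) (P n + P (n - 1))`.
The index of `d` is shifted, `d n` being the death rate in state `n + 1`, as state `0` has none. -/
noncomputable def birthDeathPoly (β : 𝕜) (a d : ℕ → 𝕜) : ℕ → 𝕜[X]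
  | 0 => 1
  | 1 => C (a 0)⁻¹ * (X + C β) - 1
  | n + 2 => C (a (n + 1))⁻¹ * ((X + C β) * birthDeathPoly β a d (n + 1)
      - C (d n) * (birthDeathPoly β a d (n + 1) + birthDeathPoly β a d n))
      - birthDeathPoly β a d (n + 1)

/-- The potential coefficients `π n = ∏ k < n, a k / d k` of the birth-and-death chain, which make
it reversible; `1 / π n` is the normalised squared norm of `birthDeathPoly β a d n`. -/
def birthDeathWeight (a d : ℕ → 𝕜) (n : ℕ) : 𝕜 := ∏ k ∈ Finset.range n, a k / d k

/-- The Christoffel–Darboux kernel `∑ k ≤ n, π k P k(-β) P k` at the point `-β`, where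
`P k(-β) = (-1) ^ k`. -/
noncomputable def birthDeathKernel (β : 𝕜) (a d : ℕ → 𝕜) (n : ℕ) : 𝕜[X] :=
  ∑ k ∈ Finset.range (n + 1), ((-1) ^ k * birthDeathWeight a d k) • birthDeathPoly β a d k

variable {β : 𝕜} {a d : ℕ → 𝕜}

lemma birthDeathPoly_zero : birthDeathPoly β a d 0 = 1 := by rw [birthDeathPoly]

lemma X_add_C_mul_birthDeathPoly_zero (ha : a 0 ≠ 0) :
    (X + C β) * birthDeathPoly β a d 0 =
      a 0 • (birthDeathPoly β a d 1 + birthDeathPoly β a d 0) := by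
  simp only [birthDeathPoly, sub_add_cancel, smul_eq_C_mul, ← mul_assoc, ← C_mul,
    mul_inv_cancel₀ ha, C_1, one_mul, mul_one]

lemma X_add_C_mul_birthDeathPoly_succ {n : ℕ} (ha : a (n + 1) ≠ 0) :
    (X + C β) * birthDeathPoly β a d (n + 1) =
      a (n + 1) • (birthDeathPoly β a d (n + 2) + birthDeathPoly β a d (n + 1))
        + d n • (birthDeathPoly β a d (n + 1) + birthDeathPoly β a d n) := by
  rw [birthDeathPoly, sub_add_cancel, smul_eq_C_mul, smul_eq_C_mul, ← mul_assoc, ← C_mul,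
    mul_inv_cancel₀ ha, C_1, one_mul, sub_add_cancel]

lemma eq_eval_birthDeathPoly (ha : ∀ n, a n ≠ 0) {u : ℕ → 𝕜} {y : 𝕜} (hzero : u 0 = 1)
    (hone : (y + β) * u 0 = a 0 * (u 1 + u 0))
    (hsucc : ∀ n, (y + β) * u (n + 1) =
      a (n + 1) * (u (n + 2) + u (n + 1)) + d n * (u (n + 1) + u n)) (n : ℕ) :
    u n = (birthDeathPoly β a d n).eval y := by
  induction n using Nat.twoStepInduction with
  | zero => rw [birthDeathPoly_zero, eval_one, hzero]
  | one =>
    have h := congrArg (eval y) (X_add_C_mul_birthDeathPoly_zero (β := β) (d := d) (ha 0))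
    simp only [birthDeathPoly_zero, eval_mul, eval_add, eval_X, eval_C, eval_smul, eval_one,
      smul_eq_mul] at h
    refine mul_left_cancel₀ (ha 0) ?_
    rw [hzero] at hone
    linear_combination h - hone
  | more n ihn ihn' =>
    have h := congrArg (eval y) (X_add_C_mul_birthDeathPoly_succ (β := β) (d := d) (ha (n + 1)))
    simp only [eval_mul, eval_add, eval_X, eval_C, eval_smul, smul_eq_mul, ← ihn, ← ihn'] at h
    refine mul_left_cancel₀ (ha (n + 1)) ?_
    linear_combination h - hsucc n

lemma birthDeathWeight_succ_mul {n : ℕ} (hd : d n ≠ 0) :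
    birthDeathWeight a d (n + 1) * d n = birthDeathWeight a d n * a n := by
  rw [birthDeathWeight, Finset.prod_range_succ, mul_assoc, div_mul_cancel₀ _ hd, birthDeathWeight]

lemma birthDeathWeight_ne_zero (ha : ∀ n, a n ≠ 0) (hd : ∀ n, d n ≠ 0) (n : ℕ) :
    birthDeathWeight a d n ≠ 0 :=
  Finset.prod_ne_zero_iff.2 fun k _ => div_ne_zero (ha k) (hd k)

lemma birthDeathWeight_pos [LinearOrder 𝕜] [IsStrictOrderedRing 𝕜] (ha : ∀ n, 0 < a n)
    (hd : ∀ n, 0 < d n) (n : ℕ) : 0 < birthDeathWeight a d n :=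
  Finset.prod_pos fun k _ => div_pos (ha k) (hd k)

lemma birthDeathKernel_succ (n : ℕ) :
    birthDeathKernel β a d (n + 1) = birthDeathKernel β a d n
      + ((-1) ^ (n + 1) * birthDeathWeight a d (n + 1)) • birthDeathPoly β a d (n + 1) :=
  Finset.sum_range_succ _ _

lemma X_add_C_mul_birthDeathKernel (ha : ∀ n, a n ≠ 0) (hd : ∀ n, d n ≠ 0) (n : ℕ) :
    (X + C β) * birthDeathKernel β a d n = ((-1) ^ n * (birthDeathWeight a d n * a n)) •
      (birthDeathPoly β a d (n + 1) + birthDeathPoly β a d n) := by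
  induction n with
  | zero =>
    simpa [birthDeathKernel, birthDeathWeight] using X_add_C_mul_birthDeathPoly_zero (ha 0)
  | succ n ih =>
    rw [birthDeathKernel_succ, mul_add, ih, mul_smul_comm, X_add_C_mul_birthDeathPoly_succ (ha _),
      ← birthDeathWeight_succ_mul (hd n)]
    module

section Span

open Submodule

lemma span_range_birthDeathPoly (ha : ∀ n, a n ≠ 0) :
    span 𝕜 (Set.range (birthDeathPoly β a d)) = ⊤ := by
  have hmem (n : ℕ) : birthDeathPoly β a d n ∈ span 𝕜 (Set.range (birthDeathPoly β a d)) :=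
    subset_span ⟨n, rfl⟩
  have hXβ (n : ℕ) :
      (X + C β) * birthDeathPoly β a d n ∈ span 𝕜 (Set.range (birthDeathPoly β a d)) := by
    cases n with
    | zero =>
      rw [X_add_C_mul_birthDeathPoly_zero (ha 0)]
      exact smul_mem _ _ (add_mem (hmem _) (hmem _))
    | succ n =>
      rw [X_add_C_mul_birthDeathPoly_succ (ha _)]
      exact add_mem (smul_mem _ _ (add_mem (hmem _) (hmem _)))
        (smul_mem _ _ (add_mem (hmem _) (hmem _)))
  refine submodule_eq_top_of_one_mem_of_X_mul_mem ?_ fun f hf => ?_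
  · exact birthDeathPoly_zero (β := β) (a := a) (d := d) ▸ hmem 0
  · have hle : span 𝕜 (Set.range (birthDeathPoly β a d)) ≤
        (span 𝕜 (Set.range (birthDeathPoly β a d))).comap (LinearMap.mulLeft 𝕜 X) := by
      refine span_le.2 ?_
      rintro _ ⟨n, rfl⟩
      have hX := sub_mem (hXβ n) (smul_mem _ β (hmem n))
      rwa [smul_eq_C_mul, ← sub_mul, add_sub_cancel_right] at hX
    exact hle hf

lemma span_range_birthDeathKernel (ha : ∀ n, a n ≠ 0) (hd : ∀ n, d n ≠ 0) :
    span 𝕜 (Set.range (birthDeathKernel β a d)) = ⊤ := by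
  have hmem (n : ℕ) : birthDeathKernel β a d n ∈ span 𝕜 (Set.range (birthDeathKernel β a d)) :=
    subset_span ⟨n, rfl⟩
  rw [eq_top_iff, ← span_range_birthDeathPoly (β := β) (d := d) ha, span_le]
  rintro _ ⟨n, rfl⟩
  cases n with
  | zero => simpa [birthDeathKernel, birthDeathWeight] using hmem 0
  | succ n =>
    have hcoef : (-1) ^ (n + 1) * birthDeathWeight a d (n + 1) ≠ 0 :=
      mul_ne_zero (pow_ne_zero _ (neg_ne_zero.2 one_ne_zero)) (birthDeathWeight_ne_zero ha hd _)
    refine (smul_mem_iff _ hcoef).1 ?_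
    rw [← add_sub_cancel_left (birthDeathKernel β a d n) (_ • _), ← birthDeathKernel_succ]
    exact sub_mem (hmem _) (hmem _)

end Span

section Functional

variable {L : 𝕜[X] →ₗ[𝕜] 𝕜}
  (horth : Pairwise fun m n => L (birthDeathPoly β a d m * birthDeathPoly β a d n) = 0)
include horth

lemma map_birthDeathKernel_mul_birthDeathPoly (m n : ℕ) :
    L (birthDeathKernel β a d m * birthDeathPoly β a d n) =
      if n ≤ m then (-1) ^ n * (birthDeathWeight a d n *
        L (birthDeathPoly β a d n * birthDeathPoly β a d n)) else 0 := by
  rw [birthDeathKernel, map_sum_smul_mul_of_orthogonal horth]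
  simp only [Finset.mem_range, Nat.lt_succ_iff, mul_assoc]

lemma birthDeathWeight_mul_map_birthDeathPoly_mul_self (ha : ∀ n, a n ≠ 0) (hd : ∀ n, d n ≠ 0)
    (n : ℕ) :
    birthDeathWeight a d n * L (birthDeathPoly β a d n * birthDeathPoly β a d n) = L 1 := by
  induction n with
  | zero => simp [birthDeathWeight, birthDeathPoly_zero]
  | succ n ih =>
    have hleft : L ((X + C β) * birthDeathKernel β a d n * birthDeathPoly β a d (n + 1)) =
        (-1) ^ n * (birthDeathWeight a d n * a n) *
          L (birthDeathPoly β a d (n + 1) * birthDeathPoly β a d (n + 1)) := by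
      rw [X_add_C_mul_birthDeathKernel ha hd, smul_mul_assoc, map_smul, add_mul, map_add,
        horth n.lt_succ_self.ne, add_zero, smul_eq_mul]
    have hright : L ((X + C β) * birthDeathPoly β a d (n + 1) * birthDeathKernel β a d n) =
        d n * ((-1) ^ n * L 1) := by
      rw [mul_comm, X_add_C_mul_birthDeathPoly_succ (ha _)]
      simp only [mul_add, mul_smul_comm, map_add, map_smul, smul_eq_mul,
        map_birthDeathKernel_mul_birthDeathPoly horth]
      rw [if_neg (by lia), if_neg (by lia), if_pos le_rfl, ih]
      ring
    rw [mul_right_comm, hleft, ← birthDeathWeight_succ_mul (hd n)] at hright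
    refine mul_left_cancel₀ (mul_ne_zero (hd n) (pow_ne_zero n (neg_ne_zero.2 one_ne_zero))) ?_
    linear_combination hright

lemma map_X_add_C_mul_birthDeathKernel_mul_of_lt (ha : ∀ n, a n ≠ 0) (hd : ∀ n, d n ≠ 0)
    {m n : ℕ} (hmn : m < n) :
    L ((X + C β) * (birthDeathKernel β a d m * birthDeathKernel β a d n)) = 0 := by
  rw [mul_left_comm, X_add_C_mul_birthDeathKernel ha hd, mul_smul_comm, mul_add, map_smul, map_add,
    map_birthDeathKernel_mul_birthDeathPoly horth, map_birthDeathKernel_mul_birthDeathPoly horth,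
    if_neg (by lia), if_neg (by lia), add_zero, smul_zero]

lemma map_X_add_C_mul_birthDeathKernel_mul_self (ha : ∀ n, a n ≠ 0) (hd : ∀ n, d n ≠ 0) (n : ℕ) :
    L ((X + C β) * (birthDeathKernel β a d n * birthDeathKernel β a d n)) =
      birthDeathWeight a d n * a n * L 1 := by
  have hsign : ((-1) ^ n * (-1) ^ n : 𝕜) = 1 := by rw [← mul_pow]; simp
  rw [mul_left_comm, X_add_C_mul_birthDeathKernel ha hd, mul_smul_comm, mul_add, map_smul, map_add,
    map_birthDeathKernel_mul_birthDeathPoly horth, map_birthDeathKernel_mul_birthDeathPoly horth,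
    if_neg (by lia), if_pos le_rfl, birthDeathWeight_mul_map_birthDeathPoly_mul_self horth ha hd,
    zero_add, smul_eq_mul]
  linear_combination (birthDeathWeight a d n * a n * L 1) * hsign

lemma map_X_add_C_mul_mul_self_nonneg [LinearOrder 𝕜] [IsStrictOrderedRing 𝕜]
    (ha : ∀ n, 0 < a n) (hd : ∀ n, 0 < d n) (hone : 0 ≤ L 1) (f : 𝕜[X]) :
    0 ≤ L ((X + C β) * (f * f)) := by
  have ha' (n : ℕ) : a n ≠ 0 := (ha n).ne'
  have hd' (n : ℕ) : d n ≠ 0 := (hd n).ne'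
  refine map_mul_self_nonneg_of_mem_span (L := L ∘ₗ LinearMap.mulLeft 𝕜 (X + C β))
    (Q := birthDeathKernel β a d) (fun m n hmn => ?_) (fun n => ?_)
    (span_range_birthDeathKernel ha' hd' ▸ Submodule.mem_top)
  · rcases hmn.lt_or_gt with hlt | hlt
    · exact map_X_add_C_mul_birthDeathKernel_mul_of_lt horth ha' hd' hlt
    · rw [mul_comm]
      exact map_X_add_C_mul_birthDeathKernel_mul_of_lt horth ha' hd' hlt
  · refine (map_X_add_C_mul_birthDeathKernel_mul_self horth ha' hd' n).ge.trans' ?_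
    exact mul_nonneg (mul_pos (birthDeathWeight_pos ha hd n) (ha n)).le hone

-- The minimiser is the Christoffel–Darboux kernel at `w`, normalised to have value `1` there.
lemma exists_eval_eq_one_and_map_mul_self_eq (ha : ∀ n, a n ≠ 0) (hd : ∀ n, d n ≠ 0) {w : 𝕜} {N : ℕ}
    (hN : ∑ n ∈ Finset.range N,
      birthDeathWeight a d n * (birthDeathPoly β a d n).eval w ^ 2 ≠ 0) :
    ∃ f : 𝕜[X], f.eval w = 1 ∧ L (f * f) = L 1 / ∑ n ∈ Finset.range N,
      birthDeathWeight a d n * (birthDeathPoly β a d n).eval w ^ 2 := by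
  set P := birthDeathPoly β a d
  set π := birthDeathWeight a d
  set S := ∑ n ∈ Finset.range N, π n * (P n).eval w ^ 2
  set K : 𝕜[X] := ∑ n ∈ Finset.range N, (π n * (P n).eval w) • P n with hK
  have hKw : K.eval w = S := by
    rw [hK, eval_finsetSum]
    refine Finset.sum_congr rfl fun n _ => ?_
    rw [eval_smul, smul_eq_mul]
    ring
  have hKK : L (K * K) = S * L 1 := by
    rw [hK, map_sum_smul_mul_self_of_orthogonal horth, Finset.sum_mul]
    refine Finset.sum_congr rfl fun n _ => ?_
    rw [← birthDeathWeight_mul_map_birthDeathPoly_mul_self horth ha hd n]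
    ring
  refine ⟨S⁻¹ • K, ?_, ?_⟩
  · rw [eval_smul, hKw, smul_eq_mul, inv_mul_cancel₀ hN]
  · rw [smul_mul_smul_comm, map_smul, hKK, smul_eq_mul]
    field_simp

end Functional

end BirthDeath

lemma summable_inv_sqrt_of_le_mul_sub {π d q : ℕ → ℝ} {s : ℝ} (hs : 0 < s)
    (hπ : ∀ n, 0 < π n) (hd : ∀ n, 0 < d n) (hq : ∀ n, 0 < q n)
    (hstep : ∀ n, s ≤ π (n + 1) * d n * (q (n + 1) - q n))
    (hsum : Summable fun n => π n * q n ^ 2) : Summable fun n => (√(d n))⁻¹ := by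
  have hmono (n : ℕ) : q n < q (n + 1) := by
    have := pos_of_mul_pos_right (hs.trans_le (hstep n)) (mul_pos (hπ (n + 1)) (hd n)).le
    linarith
  have hdiff_nonneg (n : ℕ) : 0 ≤ (q n)⁻¹ - (q (n + 1))⁻¹ :=
    sub_nonneg.2 (inv_anti₀ (hq n) (hmono n).le)
  have htelescope : Summable fun n => (q n)⁻¹ - (q (n + 1))⁻¹ := by
    refine summable_of_sum_range_le (c := (q 0)⁻¹) hdiff_nonneg fun N => ?_
    rw [Finset.sum_range_sub']
    exact sub_le_self _ (inv_pos.2 (hq N)).le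
  have hprod (n : ℕ) : s / d n ≤ π (n + 1) * q (n + 1) ^ 2 * ((q n)⁻¹ - (q (n + 1))⁻¹) := by
    have hqn := hq n
    have hqn' := hq (n + 1)
    calc s / d n ≤ π (n + 1) * (q (n + 1) - q n) := by
          rw [div_le_iff₀ (hd n)]
          linarith [hstep n]
      _ ≤ π (n + 1) * (q (n + 1) - q n) * (q (n + 1) / q n) :=
          le_mul_of_one_le_right (mul_nonneg (hπ _).le (sub_nonneg.2 (hmono n).le))
            ((one_le_div hqn).2 (hmono n).le)
      _ = _ := by field_simp
  have hbound (n : ℕ) :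
      √s * (√(d n))⁻¹ ≤ π (n + 1) * q (n + 1) ^ 2 + ((q n)⁻¹ - (q (n + 1))⁻¹) := by
    have he : 0 ≤ π (n + 1) * q (n + 1) ^ 2 := mul_nonneg (hπ _).le (sq_nonneg _)
    have hr := hdiff_nonneg n
    rw [← div_eq_mul_inv, ← Real.sqrt_div hs.le]
    exact Real.sqrt_le_iff.2 ⟨add_nonneg he hr, (hprod n).trans (by nlinarith)⟩
  refine (summable_mul_left_iff (Real.sqrt_pos.2 hs).ne').1 ?_
  exact (((summable_nat_add_iff 1).2 hsum).add htelescope).of_nonneg_of_le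
    (fun n => by positivity) hbound

section Growth

variable {β w : ℝ} {a d : ℕ → ℝ}

lemma birthDeathWeight_mul_sub_eq (ha : ∀ n, a n ≠ 0) (hd : ∀ n, d n ≠ 0) (n : ℕ) :
    birthDeathWeight a d n * a n * ((-1) ^ (n + 1) * (birthDeathPoly β a d (n + 1)).eval w
        - (-1) ^ n * (birthDeathPoly β a d n).eval w) =
      (-β - w) * ∑ k ∈ Finset.range (n + 1),
        birthDeathWeight a d k * ((-1) ^ k * (birthDeathPoly β a d k).eval w) := by
  have h := congrArg (eval w) (X_add_C_mul_birthDeathKernel (β := β) ha hd n)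
  simp only [birthDeathKernel, eval_mul, eval_add, eval_X, eval_C, eval_smul, eval_finsetSum,
    smul_eq_mul] at h
  have hsum : ∑ k ∈ Finset.range (n + 1),
      birthDeathWeight a d k * ((-1) ^ k * (birthDeathPoly β a d k).eval w) =
      ∑ k ∈ Finset.range (n + 1),
        (-1) ^ k * birthDeathWeight a d k * (birthDeathPoly β a d k).eval w :=
    Finset.sum_congr rfl fun k _ => by ring
  rw [hsum]
  linear_combination h

variable (ha : ∀ n, 0 < a n) (hd : ∀ n, 0 < d n) (hw : w < -β)
include ha hd hw

lemma neg_one_pow_mul_eval_birthDeathPoly_pos (n : ℕ) :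
    0 < (-1) ^ n * (birthDeathPoly β a d n).eval w := by
  induction n using Nat.strong_induction_on with
  | _ n ih =>
    cases n with
    | zero => simp [birthDeathPoly_zero]
    | succ n =>
      have hsum : 0 ≤ ∑ k ∈ Finset.range (n + 1),
          birthDeathWeight a d k * ((-1) ^ k * (birthDeathPoly β a d k).eval w) :=
        Finset.sum_nonneg fun k hk =>
          (mul_pos (birthDeathWeight_pos ha hd k) (ih k (Finset.mem_range.1 hk))).le
      have hincr : 0 ≤ birthDeathWeight a d n * a n *
          ((-1) ^ (n + 1) * (birthDeathPoly β a d (n + 1)).eval w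
            - (-1) ^ n * (birthDeathPoly β a d n).eval w) := by
        rw [birthDeathWeight_mul_sub_eq (fun n => (ha n).ne') fun n => (hd n).ne']
        exact mul_nonneg (by linarith) hsum
      have hdiff := nonneg_of_mul_nonneg_right hincr (mul_pos (birthDeathWeight_pos ha hd n) (ha n))
      linarith [ih n n.lt_succ_self]

lemma le_birthDeathWeight_succ_mul_sub (n : ℕ) :
    -β - w ≤ birthDeathWeight a d (n + 1) * d n *
      ((-1) ^ (n + 1) * (birthDeathPoly β a d (n + 1)).eval w
        - (-1) ^ n * (birthDeathPoly β a d n).eval w) := by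
  rw [birthDeathWeight_succ_mul (hd n).ne',
    birthDeathWeight_mul_sub_eq (fun n => (ha n).ne') fun n => (hd n).ne']
  refine le_mul_of_one_le_right (by linarith) ?_
  calc (1 : ℝ)
      = birthDeathWeight a d 0 * ((-1) ^ 0 * (birthDeathPoly β a d 0).eval w) := by
        simp [birthDeathWeight, birthDeathPoly_zero]
    _ ≤ _ := Finset.single_le_sum
        (f := fun k => birthDeathWeight a d k * ((-1) ^ k * (birthDeathPoly β a d k).eval w))
        (fun k _ => (mul_pos (birthDeathWeight_pos ha hd k)
          (neg_one_pow_mul_eval_birthDeathPoly_pos ha hd hw k)).le)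
        (Finset.mem_range.2 n.succ_pos)

lemma tendsto_sum_birthDeathWeight_mul_sq_atTop (hsum : ¬ Summable fun n => (√(d n))⁻¹) :
    Filter.Tendsto (fun N => ∑ n ∈ Finset.range N,
      birthDeathWeight a d n * (birthDeathPoly β a d n).eval w ^ 2) Filter.atTop Filter.atTop := by
  refine (not_summable_iff_tendsto_nat_atTop_of_nonneg fun n =>
    mul_nonneg (birthDeathWeight_pos ha hd n).le (sq_nonneg _)).1 fun hsummable => hsum ?_
  refine summable_inv_sqrt_of_le_mul_sub (sub_pos.2 hw) (birthDeathWeight_pos ha hd) hd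
    (neg_one_pow_mul_eval_birthDeathPoly_pos ha hd hw)
    (le_birthDeathWeight_succ_mul_sub ha hd hw) ?_
  simpa only [mul_pow, pow_right_comm _ _ 2, neg_one_sq, one_pow, one_mul] using hsummable

lemma exists_eval_eq_one_and_map_mul_self_lt {L : ℝ[X] →ₗ[ℝ] ℝ}
    (horth : Pairwise fun m n => L (birthDeathPoly β a d m * birthDeathPoly β a d n) = 0)
    (hsum : ¬ Summable fun n => (√(d n))⁻¹) {ε : ℝ} (hε : 0 < ε) :
    ∃ f : ℝ[X], f.eval w = 1 ∧ L (f * f) < ε := by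
  have htop := tendsto_sum_birthDeathWeight_mul_sq_atTop ha hd hw hsum
  obtain ⟨N, hN_ne, hN_lt⟩ := ((htop.eventually_ne_atTop 0).and
    ((htop.const_div_atTop (L 1)).eventually_lt_const hε)).exists
  obtain ⟨f, hf, hLf⟩ := exists_eval_eq_one_and_map_mul_self_eq horth (fun n => (ha n).ne')
    (fun n => (hd n).ne') hN_ne
  exact ⟨f, hf, hLf.trans_lt hN_lt⟩

end Growth

lemma sq_mul_map_mul_self_le {𝕜 : Type*} [CommRing 𝕜] [LinearOrder 𝕜] [IsStrictOrderedRing 𝕜]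
    {L : 𝕜[X] →ₗ[𝕜] 𝕜} {β w : 𝕜} (hsq : ∀ f, 0 ≤ L (f * f))
    (hβ : ∀ f, 0 ≤ L ((X + C β) * (f * f))) (hw : w ≤ -β) (g : 𝕜[X]) :
    (-β - w) ^ 2 * L (g * g) ≤ L ((X - C w) * g * ((X - C w) * g)) := by
  set s := -β - w with hs
  have hexpand : (X - C w) * g * ((X - C w) * g) =
      (X + C β) * g * ((X + C β) * g) + (2 * s) • ((X + C β) * (g * g)) + s ^ 2 • (g * g) := by
    simp only [hs, smul_eq_C_mul, C_sub, C_neg, C_mul, C_pow, map_ofNat]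
    ring
  have hcross : 0 ≤ 2 * s * L ((X + C β) * (g * g)) :=
    mul_nonneg (mul_nonneg zero_le_two (by linarith)) (hβ g)
  rw [hexpand, map_add, map_add, map_smul, map_smul, smul_eq_mul, smul_eq_mul]
  linarith [hsq ((X + C β) * g)]

section NullSets

open Module Metric ENNReal

lemma measure_eq_zero_of_closedBall_le_mul_rpow {E : Type*} [NormedAddCommGroup E]
    [NormedSpace ℝ E] [FiniteDimensional ℝ E] [MeasurableSpace E] [BorelSpace E] {μ : Measure E}
    {U : Set E} (hU : MeasurableSet U) {p : ℝ} (hp : finrank ℝ E < p) {K : ℝ≥0∞} (hK : K ≠ ∞)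
    (hball : ∀ x ∈ U, ∀ r : ℝ, 0 ≤ r → μ (closedBall x r) ≤ K * ENNReal.ofReal r ^ p) :
    μ U = 0 := by
  have hK₀ : K + 1 ≠ 0 := by simp
  have hK₁ : K + 1 ≠ ∞ := by simp [hK]
  have hle : (K + 1)⁻¹ • μ.restrict U ≤ Measure.hausdorffMeasure p := by
    refine Measure.le_hausdorffMeasure _ _ 1 one_pos fun s hs => ?_
    rw [Measure.smul_apply, smul_eq_mul, Measure.restrict_apply' hU,
      ENNReal.inv_mul_le_iff hK₀ hK₁]
    rcases (s ∩ U).eq_empty_or_nonempty with hempty | ⟨x, hxs, hxU⟩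
    · simp [hempty]
    have hdiam : ediam s ≠ ∞ := ne_top_of_le_ne_top one_ne_top hs
    have hsub : s ∩ U ⊆ closedBall x (diam s) := fun y hy => dist_le_diam_of_mem' hdiam hy.1 hxs
    calc μ (s ∩ U) ≤ K * ENNReal.ofReal (diam s) ^ p :=
          (measure_mono hsub).trans (hball x hxU _ diam_nonneg)
      _ ≤ (K + 1) * ediam s ^ p := by
          rw [diam, ENNReal.ofReal_toReal hdiam]
          gcongr
          exact le_self_add
  rw [Real.hausdorffMeasure_of_finrank_lt hp] at hle
  simpa [hK₁] using Measure.le_iff'.1 hle U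

end NullSets

section Moments

variable {μ : Measure ℝ}

lemma integrable_eval_of_integrable_abs_pow
    (hmom : ∀ n : ℕ, Integrable (fun y : ℝ => |y| ^ n) μ) (f : ℝ[X]) :
    Integrable (fun y => f.eval y) μ := by
  simp only [eval_eq_sum_range]
  refine integrable_finsetSum _ fun n _ => Integrable.const_mul ?_ _
  refine (integrable_norm_iff (by fun_prop)).1 ?_
  simpa only [norm_pow, Real.norm_eq_abs] using hmom n

/-- Integration against a measure with finite moments, as a linear functional on polynomials. -/
noncomputable def momentFunctional (μ : Measure ℝ)
    (hint : ∀ f : ℝ[X], Integrable (fun y => f.eval y) μ) : ℝ[X] →ₗ[ℝ] ℝ where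
  toFun f := ∫ y, f.eval y ∂μ
  map_add' f g := by simp only [eval_add, integral_add (hint f) (hint g)]
  map_smul' r f := by simp only [eval_smul, integral_smul, RingHom.id_apply]

variable (hint : ∀ f : ℝ[X], Integrable (fun y => f.eval y) μ)

lemma momentFunctional_mul_self_nonneg (f : ℝ[X]) : 0 ≤ momentFunctional μ hint (f * f) := by
  simp only [momentFunctional, LinearMap.coe_mk, AddHom.coe_mk, eval_mul]
  exact integral_nonneg fun y => mul_self_nonneg _

include hint in
lemma isFiniteMeasure_of_integrable_eval : IsFiniteMeasure μ :=
  (integrable_const_iff_isFiniteMeasure one_ne_zero).1 (by simpa using hint 1)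

lemma measureReal_le_momentFunctional {s : Set ℝ} {f : ℝ[X]} (hf : ∀ y, 0 ≤ f.eval y)
    (hs : ∀ y ∈ s, 1 ≤ f.eval y) : μ.real s ≤ momentFunctional μ hint f := by
  have := isFiniteMeasure_of_integrable_eval hint
  calc μ.real s ≤ μ.real {y | 1 ≤ f.eval y} := measureReal_mono hs
    _ ≤ momentFunctional μ hint f := by
      simpa [momentFunctional] using mul_meas_ge_le_integral_of_nonneg (.of_forall hf) (hint f) 1

variable {β w r : ℝ} {f g : ℝ[X]}

lemma measureReal_closedBall_le (hg : 1 - f = (X - C w) * g) :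
    μ.real (Metric.closedBall w r) ≤ 2 * momentFunctional μ hint (f * f)
      + 2 * r ^ 2 * momentFunctional μ hint (g * g) := by
  have hle := measureReal_le_momentFunctional hint (s := Metric.closedBall w r)
    (f := (2 : ℝ) • (f * f) + (2 * r ^ 2) • (g * g)) (fun y => ?_) (fun y hy => ?_)
  · simpa only [map_add, map_smul, smul_eq_mul] using hle
  · simp only [eval_add, eval_smul, eval_mul, smul_eq_mul]
    exact add_nonneg (mul_nonneg zero_le_two (mul_self_nonneg _))
      (mul_nonneg (by positivity) (mul_self_nonneg _))
  · have hy_eq := congrArg (eval y) hg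
    simp only [eval_sub, eval_one, eval_mul, eval_X, eval_C] at hy_eq
    have hy_sq : (y - w) ^ 2 ≤ r ^ 2 := sq_le_sq' (abs_le.1 hy).1 (abs_le.1 hy).2
    simp only [eval_add, eval_smul, eval_mul, smul_eq_mul]
    calc (1 : ℝ) = (f.eval y + (y - w) * g.eval y) ^ 2 := by rw [← hy_eq]; ring
      _ ≤ 2 * (f.eval y ^ 2 + ((y - w) * g.eval y) ^ 2) := add_sq_le
      _ = 2 * f.eval y ^ 2 + 2 * (y - w) ^ 2 * g.eval y ^ 2 := by ring
      _ ≤ 2 * f.eval y ^ 2 + 2 * r ^ 2 * g.eval y ^ 2 := by gcongr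
      _ = _ := by ring

variable (hβ : ∀ f, 0 ≤ momentFunctional μ hint ((X + C β) * (f * f)))
include hβ

lemma sq_mul_momentFunctional_mul_self_le (hw : w ≤ -β) (hg : 1 - f = (X - C w) * g) :
    (-β - w) ^ 2 * momentFunctional μ hint (g * g) ≤
      2 * momentFunctional μ hint 1 + 2 * momentFunctional μ hint (f * f) := by
  have hsq := momentFunctional_mul_self_nonneg hint
  have hparallelogram : (1 - f) * (1 - f) + (1 + f) * (1 + f) =
      (2 : ℝ) • (1 : ℝ[X]) + (2 : ℝ) • (f * f) := by
    simp only [smul_eq_C_mul, map_ofNat]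
    ring
  have hL := congrArg (momentFunctional μ hint) hparallelogram
  simp only [map_add, map_smul, smul_eq_mul] at hL
  calc (-β - w) ^ 2 * momentFunctional μ hint (g * g)
      ≤ momentFunctional μ hint ((1 - f) * (1 - f)) := hg ▸ sq_mul_map_mul_self_le hsq hβ hw g
    _ ≤ _ := by linarith [hsq (1 + f)]

lemma sq_mul_measureReal_closedBall_le (hw : w ≤ -β) (hf : f.eval w = 1) :
    (-β - w) ^ 2 * μ.real (Metric.closedBall w r) ≤
      4 * r ^ 2 * momentFunctional μ hint 1
        + (2 * (-β - w) ^ 2 + 4 * r ^ 2) * momentFunctional μ hint (f * f) := by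
  set L := momentFunctional μ hint
  obtain ⟨g, hg⟩ : X - C w ∣ 1 - f := by
    rw [dvd_iff_isRoot, IsRoot, eval_sub, eval_one, hf, sub_self]
  calc (-β - w) ^ 2 * μ.real (Metric.closedBall w r)
      ≤ (-β - w) ^ 2 * (2 * L (f * f) + 2 * r ^ 2 * L (g * g)) := by
        gcongr
        exact measureReal_closedBall_le hint hg
    _ = 2 * (-β - w) ^ 2 * L (f * f) + 2 * r ^ 2 * ((-β - w) ^ 2 * L (g * g)) := by ring
    _ ≤ 2 * (-β - w) ^ 2 * L (f * f) + 2 * r ^ 2 * (2 * L 1 + 2 * L (f * f)) := by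
        gcongr
        exact sq_mul_momentFunctional_mul_self_le hint hβ hw hg
    _ = _ := by ring

lemma sq_mul_measureReal_closedBall_le_of_exists (hw : w < -β)
    (hchr : ∀ ε > 0, ∃ f : ℝ[X], f.eval w = 1 ∧ momentFunctional μ hint (f * f) < ε) :
    (-β - w) ^ 2 * μ.real (Metric.closedBall w r) ≤ 4 * r ^ 2 * momentFunctional μ hint 1 := by
  have hcoef : 0 < 2 * (-β - w) ^ 2 + 4 * r ^ 2 :=
    add_pos_of_pos_of_nonneg (mul_pos two_pos (pow_pos (sub_pos.2 hw) 2)) (by positivity)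
  refine le_of_forall_pos_le_add fun ε hε => ?_
  obtain ⟨f, hf, hLf⟩ := hchr (ε / (2 * (-β - w) ^ 2 + 4 * r ^ 2)) (div_pos hε hcoef)
  refine (sq_mul_measureReal_closedBall_le hint hβ hw.le hf).trans ?_
  rw [lt_div_iff₀' hcoef] at hLf
  gcongr

end Moments

theorem measure_Iio_eq_zero_of_orthogonal_birthDeathPoly {μ : Measure ℝ} {β : ℝ} {a d : ℕ → ℝ}
    (ha : ∀ n, 0 < a n) (hd : ∀ n, 0 < d n) (hsum : ¬ Summable fun n => (√(d n))⁻¹)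
    (hint : ∀ f : ℝ[X], Integrable (fun y => f.eval y) μ)
    (horth : Pairwise fun m n =>
      ∫ y, (birthDeathPoly β a d m).eval y * (birthDeathPoly β a d n).eval y ∂μ = 0) :
    μ (Set.Iio (-β)) = 0 := by
  set L := momentFunctional μ hint
  have := isFiniteMeasure_of_integrable_eval hint
  have hL_orth : Pairwise fun m n => L (birthDeathPoly β a d m * birthDeathPoly β a d n) = 0 :=
    fun m n hmn => by simpa [L, momentFunctional] using horth hmn
  have hL_one : 0 ≤ L 1 := by simpa using momentFunctional_mul_self_nonneg hint 1
  have hβ := map_X_add_C_mul_mul_self_nonneg hL_orth ha hd hL_one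
  refine measure_null_of_locally_null _ fun x hx => ?_
  obtain ⟨b, hxb, hb⟩ := exists_between (Set.mem_Iio.1 hx)
  refine ⟨Set.Iio b, mem_nhdsWithin_of_mem_nhds (Iio_mem_nhds hxb), ?_⟩
  refine measure_eq_zero_of_closedBall_le_mul_rpow measurableSet_Iio (p := 2)
    (K := ENNReal.ofReal (4 * L 1 / (-β - b) ^ 2)) (by simp) ENNReal.ofReal_ne_top
    fun w hwb r hr => ?_
  have hw : w < -β := lt_trans hwb hb
  have hball := sq_mul_measureReal_closedBall_le_of_exists (r := r) hint hβ hw fun ε hε =>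
    exists_eval_eq_one_and_map_mul_self_lt ha hd hw hL_orth hsum hε
  rw [ENNReal.rpow_ofNat, ← ENNReal.ofReal_pow hr, ← ENNReal.ofReal_mul (by positivity),
    ← ofReal_measureReal]
  refine ENNReal.ofReal_le_ofReal ?_
  rw [div_mul_eq_mul_div, le_div_iff₀ (pow_pos (sub_pos.2 hb) 2)]
  calc μ.real (Metric.closedBall w r) * (-β - b) ^ 2
      ≤ μ.real (Metric.closedBall w r) * (-β - w) ^ 2 := by
        gcongr
        exact le_of_lt hwb
    _ ≤ 4 * L 1 * r ^ 2 := by linarith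

section Coefficients

variable {η θ τ q t : ℝ}

lemma qnum_zero : qnum q 0 = 0 := Finset.sum_range_zero _

lemma qnum_succ_pos (hq : -1 < q) (n : ℕ) : 0 < qnum q (n + 1) :=
  geom_sum_pos' (by linarith) n.succ_ne_zero

lemma qnum_nonneg (hq : -1 < q) (n : ℕ) : 0 ≤ qnum q n := by
  cases n with
  | zero => exact qnum_zero.ge
  | succ n => exact (qnum_succ_pos hq n).le

lemma qnum_le (hq : |q| ≤ 1) (n : ℕ) : qnum q n ≤ n := by
  calc qnum q n ≤ ∑ _i ∈ Finset.range n, (1 : ℝ) := Finset.sum_le_sum fun i _ =>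
        (le_abs_self _).trans (abs_pow q i ▸ pow_le_one₀ (abs_nonneg q) hq)
    _ = n := by simp

lemma aCoef_pos (hq : -1 < q) (hη : 0 < η) (hθ : 0 ≤ θ) (hτ : 0 ≤ τ) (n : ℕ) :
    0 < aCoef η θ τ q n := by
  have := qnum_nonneg hq n
  rw [aCoef]
  positivity

lemma cCoef_zero : cCoef η τ q t 0 = 0 := by rw [cCoef, qnum_zero, mul_zero]

lemma cCoef_succ_pos (hq : -1 < q) (hη : 0 < η) (hτ : 0 ≤ τ) (ht : 0 < t) (n : ℕ) :
    0 < cCoef η τ q t (n + 1) := by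
  have := qnum_succ_pos hq n
  have := qnum_nonneg hq n
  rw [cCoef, Nat.add_sub_cancel]
  positivity

lemma bCoef_add_inv (n : ℕ) : bCoef η θ τ q t n + η⁻¹ = aCoef η θ τ q n + cCoef η τ q t n := by
  rw [aCoef, bCoef, cCoef]
  ring

lemma cCoef_succ_le (hq : -1 < q) (hq1 : q ≤ 1) (hη : 0 < η) (hτ : 0 ≤ τ) (ht : 0 < t) (n : ℕ) :
    cCoef η τ q t (n + 1) ≤ η * (t + τ) * ((n : ℝ) + 1) ^ 2 := by
  have habs : |q| ≤ 1 := abs_le.2 ⟨hq.le, hq1⟩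
  have hn : qnum q n ≤ n + 1 := (qnum_le habs n).trans (by linarith)
  have hn' : qnum q (n + 1) ≤ n + 1 := mod_cast qnum_le habs (n + 1)
  have ht' : t ≤ t * (n + 1) := le_mul_of_one_le_right ht.le (by linarith [n.cast_nonneg (α := ℝ)])
  have := qnum_nonneg hq n
  have := qnum_nonneg hq (n + 1)
  calc cCoef η τ q t (n + 1) = η * (t + τ * qnum q n) * qnum q (n + 1) := by
        rw [cCoef, Nat.add_sub_cancel]
    _ ≤ η * (t * (n + 1) + τ * (n + 1)) * (n + 1) := by gcongr
    _ = η * (t + τ) * ((n : ℝ) + 1) ^ 2 := by ring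

lemma not_summable_inv_sqrt_cCoef (hq : -1 < q) (hq1 : q ≤ 1) (hη : 0 < η) (hτ : 0 ≤ τ)
    (ht : 0 < t) : ¬ Summable fun n => (√(cCoef η τ q t (n + 1)))⁻¹ := by
  intro hsum
  have hA : 0 < η * (t + τ) := by positivity
  have hle (n : ℕ) : (√(η * (t + τ)))⁻¹ * ((n + 1 : ℕ) : ℝ)⁻¹ ≤ (√(cCoef η τ q t (n + 1)))⁻¹ := by
    rw [← mul_inv]
    refine inv_anti₀ (Real.sqrt_pos.2 (cCoef_succ_pos hq hη hτ ht n)) ?_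
    refine Real.sqrt_le_iff.2 ⟨by positivity, (cCoef_succ_le hq hq1 hη hτ ht n).trans_eq ?_⟩
    rw [mul_pow, Real.sq_sqrt hA.le, Nat.cast_succ]
  have hharmonic := (summable_mul_left_iff (by positivity)).1
    (hsum.of_nonneg_of_le (fun n => by positivity) hle)
  exact Real.not_summable_natCast_inv ((summable_nat_add_iff 1).1 hharmonic)

end Coefficients

theorem stmt13_general (η θ τ q t : ℝ)
    (hq : -1 < q) (hq1 : q ≤ 1) (hη : 0 < η) (hθ : 0 ≤ θ) (hτ : 0 ≤ τ) (ht : 0 < t)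
    (p : ℕ → ℝ → ℝ)
    (hp0 : ∀ y : ℝ, p 0 y = 1)
    (hprec : ∀ (n : ℕ) (y : ℝ), y * p n y =
      aCoef η θ τ q n * p (n + 1) y + bCoef η θ τ q t n * p n y
        + cCoef η τ q t n * p (n - 1) y)
    (μ : Measure ℝ)
    (hmom : ∀ n : ℕ, Integrable (fun y : ℝ => |y| ^ n) μ)
    (horth : ∀ m n : ℕ, m ≠ n → ∫ y, p m y * p n y ∂μ = 0) :
    μ (Set.Iio (-(1 / η))) = 0 := by
  have ha := aCoef_pos hq hη hθ hτ
  have hp (n : ℕ) (y : ℝ) : p n y =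
      (birthDeathPoly η⁻¹ (aCoef η θ τ q) (fun k => cCoef η τ q t (k + 1)) n).eval y := by
    refine eq_eval_birthDeathPoly (u := fun k => p k y) (fun k => (ha k).ne') (hp0 y) ?_ ?_ n
    · linear_combination hprec 0 y + p 0 y * bCoef_add_inv (θ := θ) (τ := τ) (q := q) (t := t) 0
        + (p 0 y + p (0 - 1) y) * cCoef_zero (η := η) (τ := τ) (q := q) (t := t)
    · intro k
      have hrec := hprec (k + 1) y
      rw [Nat.add_sub_cancel] at hrec
      linear_combination hrec + p (k + 1) y * bCoef_add_inv (k + 1)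
  rw [one_div]
  exact measure_Iio_eq_zero_of_orthogonal_birthDeathPoly ha (cCoef_succ_pos hq hη hτ ht)
    (not_summable_inv_sqrt_cCoef hq hq1 hη hτ ht) (integrable_eval_of_integrable_abs_pow hmom)
    fun m n hmn => by simpa only [← hp] using horth m n hmn

/-- for `0 ≤ q ≤ 1`, `η > 0`, `θ ≥ 0`, `τ ≥ 0`, `t > 0`, any orthogonality
measure `μ_t` of the polynomials `{p_n(·;t)}` (a probability measure with finite moments)
is supported in `[-1/η, ∞)`, i.e. `μ_t((-∞, -1/η)) = 0`. -/
theorem stmt13 (η θ τ q t : ℝ)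
    (hq0 : 0 ≤ q) (hq1 : q ≤ 1) (hη : 0 < η) (hθ : 0 ≤ θ) (hτ : 0 ≤ τ) (ht : 0 < t)
    (p : ℕ → ℝ → ℝ)
    (hp0 : ∀ y : ℝ, p 0 y = 1)
    (hprec : ∀ (n : ℕ) (y : ℝ), y * p n y =
      aCoef η θ τ q n * p (n + 1) y + bCoef η θ τ q t n * p n y
        + cCoef η τ q t n * p (n - 1) y)
    (μ : Measure ℝ)
    (hprob : IsProbabilityMeasure μ)
    (hmom : ∀ n : ℕ, Integrable (fun y : ℝ => |y| ^ n) μ)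
    (horth : ∀ m n : ℕ, m ≠ n → ∫ y, p m y * p n y ∂μ = 0) :
    μ (Set.Iio (-(1 / η))) = 0 := by
  exact stmt13_general η θ τ q t (by linarith) hq1 hη hθ hτ ht p hp0 hprec μ hmom horth
end

section
/- Let 0 < q ≤ 1, η > 0, θ ≥ 0, τ ≥ 0 and fix s > 0 and x ∈ ℝ. Define β_{n,k}(x,s) by β_{n,k} = 0 for n < 0, k < 0 or k > n, β_{n,0}(x,s) = p_n(x;s), and the recurrence [k+1]_q β_{n,k+1}(x,s) = q^k [n−k]_q β_{n,k}(x,s) + [n]_q β_{n−1,k}(x,s). Then for every real t and all integers 0 ≤ k ≤ n: a_n β_{n+1,k}(x,s) + b_n(t) β_{n,k}(x,s) + c_n(t) β_{n−1,k}(x,s) = A_{k−1}(x,s) β_{n,k−1}(x,s) + B_k(x,t,s) β_{n,k}(x,s) + C_{k+1}(t,s) β_{n,k+1}(x,s). -/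
/-!
For fixed `k`, regard `v_k = (n ↦ β_{n,k})` as a vector in the space of sequences, and put
`(D f)(n) = [n]_q (f(n) + f(n-1))` and `(U f)(n) = f(n+1)`. Since `q^k [n-k]_q = [n]_q - [k]_q`, the
recurrence for `β` says that `D` is bidiagonal: `D v_k = [k]_q v_k + [k+1]_q v_{k+1}`. With
`P(X) = η⁻¹ + θ X + ητ X²`, the three-term operator in `n` on the left-hand side is
`P(D) U + ηt D`, and the right-hand side is
`P(D) v_{k-1} + ηt D v_k + (x - ηs D)(q^k v_k + q^{k-1} v_{k-1})`. The claim is therefore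
`P(D) (U v_k - v_{k-1}) = (x - ηs D)(q^k v_k + q^{k-1} v_{k-1})`.

Because `U D = q D U + U + 1`, both `w_k = U v_k - v_{k-1}` and `w_k = q^k v_k + q^{k-1} v_{k-1}`
satisfy `[k+1]_q w_{k+1} = (q D + 1 - [k]_q) w_k`, a recurrence preserved by polynomials in `D`. So
the two sides agree for all `k` once they agree for `k = 0`, where the claim is the three-term
recurrence of the polynomials `p_n(x;s)`.
-/

/-- `[n]_q` for an integer index, with value `0` for negative indices. -/
noncomputable def qnumZ (q : ℝ) (n : ℤ) : ℝ :=
  if 0 ≤ n then ∑ i ∈ Finset.range n.toNat, q ^ i else 0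

/-- `a_n = η⁻¹ + θ[n]_q + [n]_q² ητ`. -/
noncomputable def aZ (η θ τ q : ℝ) (n : ℤ) : ℝ :=
  η⁻¹ + θ * qnumZ q n + (qnumZ q n) ^ 2 * η * τ

/-- `b_n(t) = (tη + θ + ([n]_q + [n-1]_q)ητ)[n]_q`. -/
noncomputable def bZ (η θ τ q t : ℝ) (n : ℤ) : ℝ :=
  (t * η + θ + (qnumZ q n + qnumZ q (n - 1)) * η * τ) * qnumZ q n

/-- `c_n(t) = η(t + τ[n-1]_q)[n]_q`. -/
noncomputable def cZ (η τ q t : ℝ) (n : ℤ) : ℝ :=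
  η * (t + τ * qnumZ q (n - 1)) * qnumZ q n

/-- `A_n(x,s) = a_n + q^n x - sη q^n [n]_q`. -/
noncomputable def AZ (η θ τ q x s : ℝ) (n : ℤ) : ℝ :=
  aZ η θ τ q n + q ^ n * x - s * η * q ^ n * qnumZ q n

/-- `B_n(x,t,s) = b_n(t) + q^n x - (1+q) q^{n-1} η s [n]_q`. -/
noncomputable def BZ (η θ τ q x t s : ℝ) (n : ℤ) : ℝ :=
  bZ η θ τ q t n + q ^ n * x - (1 + q) * q ^ (n - 1) * η * s * qnumZ q n

/-- `C_n(t,s) = c_n(t) - q^{n-1} η s [n]_q`. -/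
noncomputable def CZ (η θ τ q t s : ℝ) (n : ℤ) : ℝ :=
  cZ η τ q t n - q ^ (n - 1) * η * s * qnumZ q n

section QNumber

variable {R : Type*} [CommRing R] (q : R)

/-- The `q`-number `[n]_q` of a natural number, over an arbitrary commutative ring. -/
def qNum (n : ℕ) : R := ∑ i ∈ Finset.range n, q ^ i

@[simp]
lemma qNum_zero : qNum q 0 = 0 := Finset.sum_range_zero _

lemma qNum_succ (n : ℕ) : qNum q (n + 1) = q * qNum q n + 1 := geom_sum_succ

lemma qNum_add (m n : ℕ) : qNum q (m + n) = qNum q m + q ^ m * qNum q n := by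
  simp only [qNum, Finset.sum_range_add, pow_add, Finset.mul_sum]

end QNumber

section Ladder

variable {R V : Type*} [CommRing R] [AddCommGroup V] [Module R V]

/-- The sequence `k ↦ v_{k-1}`, with the convention `v_{-1} = 0`. -/
def delay (v : ℕ → V) : ℕ → V
  | 0 => 0
  | k + 1 => v k

@[simp]
lemma delay_zero (v : ℕ → V) : delay v 0 = 0 := rfl

@[simp]
lemma delay_succ (v : ℕ → V) (k : ℕ) : delay v (k + 1) = v k := rfl

/-- A `q`-ladder of `D`: vectors `v_k` on which `D` acts by `D v_k = [k]_q v_k + [k+1]_q v_{k+1}`.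
The sequences `n ↦ β_{n,k}` form one. -/
def IsQLadder (q : R) (D : Module.End R V) (v : ℕ → V) : Prop :=
  ∀ k, D (v k) = qNum q k • v k + qNum q (k + 1) • v (k + 1)

/-- A twisted `q`-ladder of `D`: vectors `w_k` with `[k+1]_q w_{k+1} = (q D + 1 - [k]_q) w_k`. When
the `[k+1]_q` are invertible this determines `w` from `w_0`. -/
def IsTwistedQLadder (q : R) (D : Module.End R V) (w : ℕ → V) : Prop :=
  ∀ k, qNum q (k + 1) • w (k + 1) = q • D (w k) + (1 - qNum q k) • w k

variable {q : R} {D U P X : Module.End R V} {v w w' : ℕ → V}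

namespace IsTwistedQLadder

lemma map (hw : IsTwistedQLadder q D w) (hP : Commute P D) :
    IsTwistedQLadder q D fun k => P (w k) := fun k => by
  have hPD : P (D (w k)) = D (P (w k)) := LinearMap.congr_fun hP (w k)
  rw [← map_smul, hw k, map_add, map_smul, map_smul, hPD]

lemma eq_of_zero_eq (hw : IsTwistedQLadder q D w) (hw' : IsTwistedQLadder q D w')
    (hreg : ∀ k, IsSMulRegular V (qNum q (k + 1))) (h0 : w 0 = w' 0) : w = w' := by
  funext k
  induction k with
  | zero => exact h0
  | succ k ih => exact hreg k <| by simp only [hw k, hw' k, ih]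

end IsTwistedQLadder

namespace IsQLadder

lemma apply_delay (hv : IsQLadder q D v) (k : ℕ) :
    D (delay v k) = qNum q (k - 1) • delay v k + qNum q k • v k := by
  cases k with
  | zero => simp
  | succ k => exact hv k

lemma sq_apply_delay (hv : IsQLadder q D v) (k : ℕ) :
    (D ^ 2) (delay v k) = qNum q (k - 1) ^ 2 • delay v k
      + ((qNum q k + qNum q (k - 1)) * qNum q k) • v k
      + (qNum q k * qNum q (k + 1)) • v (k + 1) := by
  rw [pow_two, Module.End.mul_apply, hv.apply_delay, map_add, map_smul, map_smul, hv.apply_delay,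
    hv k]
  module

lemma shift_sub_delay (hv : IsQLadder q D v) (hU : U * D = q • (D * U) + U + 1) :
    IsTwistedQLadder q D fun k => U (v k) - delay v k := fun k => by
  have hUD : U (D (v k)) = q • D (U (v k)) + U (v k) + v k := LinearMap.congr_fun hU (v k)
  rw [hv k, map_add, map_smul, map_smul] at hUD
  have hpred : (q * qNum q (k - 1) + 1) • delay v k = qNum q k • delay v k := by
    cases k with
    | zero => simp
    | succ k => rw [qNum_succ, Nat.add_sub_cancel]
  simp only [delay_succ, map_sub, hv.apply_delay]
  rw [qNum_succ] at hUD ⊢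
  linear_combination (norm := module) hUD + hpred

lemma pow_smul_add_delay (hv : IsQLadder q D v) :
    IsTwistedQLadder q D fun k => q ^ k • v k + q ^ (k - 1) • delay v k := fun k => by
  simp only [delay_succ, map_add, map_smul, hv.apply_delay, hv k, Nat.add_sub_cancel]
  cases k with
  | zero => simp [qNum_succ]
  | succ k =>
    simp only [delay_succ, qNum_succ, Nat.add_sub_cancel]
    module

theorem apply_shift (hv : IsQLadder q D v) (hU : U * D = q • (D * U) + U + 1)
    (hreg : ∀ k, IsSMulRegular V (qNum q (k + 1))) (hP : Commute P D) (hX : Commute X D)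
    (h0 : P (U (v 0)) = X (v 0)) (k : ℕ) :
    P (U (v k)) = P (delay v k) + X (q ^ k • v k + q ^ (k - 1) • delay v k) := by
  have h := ((hv.shift_sub_delay hU).map hP).eq_of_zero_eq (hv.pow_smul_add_delay.map hX) hreg
    (by simpa using h0)
  rw [← congrFun h k, ← map_add, add_sub_cancel]

end IsQLadder

end Ladder

section Sequence

/-- The shift `(U f)(n) = f(n+1)` on sequences. -/
def seqShift (R : Type*) [CommRing R] : Module.End R (ℕ → R) := LinearMap.funLeft R R Nat.succ

variable {R : Type*} [CommRing R] (q : R)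

/-- The operator `(D f)(n) = [n]_q (f(n) + f(n-1))` on sequences. The truncated subtraction is
harmless, because `[0]_q = 0`. -/
def qAdjacentSum : Module.End R (ℕ → R) where
  toFun f n := qNum q n * (f n + f (n - 1))
  map_add' f g := by ext n; simp only [Pi.add_apply]; ring
  map_smul' c f := by ext n; simp only [Pi.smul_apply, smul_eq_mul, RingHom.id_apply]; ring

@[simp]
lemma seqShift_apply (f : ℕ → R) (n : ℕ) : seqShift R f n = f (n + 1) := rfl

lemma qAdjacentSum_apply (f : ℕ → R) (n : ℕ) :
    qAdjacentSum q f n = qNum q n * (f n + f (n - 1)) := rfl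

lemma qAdjacentSum_seqShift (f : ℕ → R) (n : ℕ) :
    qAdjacentSum q (seqShift R f) n = qNum q n * (f (n + 1) + f n) := by
  cases n with
  | zero => simp [qAdjacentSum_apply]
  | succ n => rfl

lemma seqShift_mul_qAdjacentSum :
    seqShift R * qAdjacentSum q = q • (qAdjacentSum q * seqShift R) + seqShift R + 1 := by
  refine LinearMap.ext fun f => funext fun n => ?_
  simp only [Module.End.mul_apply, LinearMap.add_apply, LinearMap.smul_apply,
    Module.End.one_apply, Pi.add_apply, Pi.smul_apply, smul_eq_mul, seqShift_apply,
    qAdjacentSum_seqShift]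
  rw [qAdjacentSum_apply, qNum_succ, Nat.add_sub_cancel]
  ring

lemma sq_qAdjacentSum_seqShift (f : ℕ → R) (n : ℕ) :
    (qAdjacentSum q ^ 2) (seqShift R f) n = qNum q n ^ 2 * f (n + 1)
      + (qNum q n + qNum q (n - 1)) * qNum q n * f n
      + qNum q (n - 1) * qNum q n * f (n - 1) := by
  rw [pow_two, Module.End.mul_apply, qAdjacentSum_apply, qAdjacentSum_seqShift,
    qAdjacentSum_seqShift]
  cases n with
  | zero => simp
  | succ n => simp only [Nat.add_sub_cancel]; ring

lemma isQLadder_of_recurrence {v : ℕ → ℕ → R} (hzero : ∀ n k, n < k → v k n = 0)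
    (hrec : ∀ n k, k ≤ n → qNum q (k + 1) * v (k + 1) n =
      q ^ k * qNum q (n - k) * v k n + qNum q n * v k (n - 1)) :
    IsQLadder q (qAdjacentSum q) v := fun k => by
  ext n
  simp only [qAdjacentSum_apply, Pi.add_apply, Pi.smul_apply, smul_eq_mul]
  rcases lt_or_ge n k with hnk | hkn
  · simp [hzero n k hnk, hzero (n - 1) k (by lia), hzero n (k + 1) (by lia)]
  · obtain ⟨d, rfl⟩ := Nat.exists_eq_add_of_le hkn
    have h := hrec (k + d) k hkn
    rw [Nat.add_sub_cancel_left] at h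
    linear_combination v k (k + d) * qNum_add q k d - h

end Sequence

section Coefficients

variable (η θ τ q t s x : ℝ)

lemma qnumZ_natCast (n : ℕ) : qnumZ q n = qNum q n := by
  simp [qnumZ, qNum]

/-- The prefactor `[n]_q` reconciles the integer predecessor with the truncated one at `n = 0`. -/
lemma apply_pred_mul_qNum (g : ℤ → ℝ) (n : ℕ) :
    g ((n : ℤ) - 1) * qNum q n = g ((n - 1 : ℕ) : ℤ) * qNum q n := by
  cases n with
  | zero => simp
  | succ n => simp

lemma aZ_natCast (n : ℕ) : aZ η θ τ q n = η⁻¹ + θ * qNum q n + qNum q n ^ 2 * η * τ := by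
  rw [aZ, qnumZ_natCast]

lemma bZ_natCast (n : ℕ) : bZ η θ τ q t n =
    (t * η + θ + (qNum q n + qNum q (n - 1)) * η * τ) * qNum q n := by
  have h := apply_pred_mul_qNum q (qnumZ q) n
  rw [qnumZ_natCast] at h
  rw [bZ, qnumZ_natCast]
  linear_combination η * τ * h

lemma cZ_natCast (n : ℕ) : cZ η τ q t n = η * (t + τ * qNum q (n - 1)) * qNum q n := by
  have h := apply_pred_mul_qNum q (qnumZ q) n
  rw [qnumZ_natCast] at h
  rw [cZ, qnumZ_natCast]
  linear_combination η * τ * h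

lemma cZ_mul_apply_pred (g : ℤ → ℝ) (n : ℕ) :
    cZ η τ q t n * g ((n : ℤ) - 1) = cZ η τ q t n * g ((n - 1 : ℕ) : ℤ) := by
  rw [cZ_natCast]
  linear_combination η * (t + τ * qNum q (n - 1)) * apply_pred_mul_qNum q g n

variable {V : Type*} [AddCommGroup V] [Module ℝ V]

/-- The polynomial `P(D) = η⁻¹ + θ D + ητ D²` in an operator `D`, for which `a_n = P([n]_q)`. -/
noncomputable def quadOp (D : Module.End ℝ V) : Module.End ℝ V :=
  η⁻¹ • 1 + θ • D + (η * τ) • D ^ 2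

lemma quadOp_commute (D : Module.End ℝ V) : Commute (quadOp η θ τ D) D :=
  (((Commute.one_left D).smul_left _).add_left ((Commute.refl D).smul_left _)).add_left
    (((Commute.refl D).pow_left 2).smul_left _)

lemma jacobi_eq_quadOp (f : ℕ → ℝ) (n : ℕ) :
    aZ η θ τ q n * f (n + 1) + bZ η θ τ q t n * f n + cZ η τ q t n * f (n - 1)
      = quadOp η θ τ (qAdjacentSum q) (seqShift ℝ f) n + η * t * qAdjacentSum q f n := by
  simp only [quadOp, LinearMap.add_apply, LinearMap.smul_apply, Module.End.one_apply,
    Pi.add_apply, Pi.smul_apply, smul_eq_mul, seqShift_apply, qAdjacentSum_seqShift,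
    sq_qAdjacentSum_seqShift, aZ_natCast, bZ_natCast, cZ_natCast]
  rw [qAdjacentSum_apply]
  ring

lemma AZ_smul_delay (v : ℕ → V) (k : ℕ) :
    AZ η θ τ q x s (k - 1) • delay v k = (η⁻¹ + θ * qNum q (k - 1)
      + qNum q (k - 1) ^ 2 * η * τ + q ^ (k - 1) * x
      - s * η * q ^ (k - 1) * qNum q (k - 1)) • delay v k := by
  cases k with
  | zero => simp
  | succ k => simp [AZ, aZ_natCast, qnumZ_natCast]

lemma BZ_natCast (k : ℕ) : BZ η θ τ q x t s k =
    bZ η θ τ q t k + q ^ k * x - (q ^ k + q ^ (k - 1)) * η * s * qNum q k := by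
  rw [BZ, zpow_natCast, qnumZ_natCast]
  cases k with
  | zero => simp
  | succ k =>
    rw [Nat.cast_succ, add_sub_cancel_right, zpow_natCast, Nat.add_sub_cancel]
    ring

lemma CZ_natCast_add_one (k : ℕ) : CZ η θ τ q t s (k + 1) =
    η * (t + τ * qNum q k) * qNum q (k + 1) - q ^ k * η * s * qNum q (k + 1) := by
  rw [CZ, add_sub_cancel_right, zpow_natCast, ← Nat.cast_succ, cZ_natCast, qnumZ_natCast,
    Nat.succ_sub_one]

namespace IsQLadder

variable {η θ τ q s x}

lemma dual_jacobi_eq_quadOp {D : Module.End ℝ V} {v : ℕ → V} (hv : IsQLadder q D v) (k : ℕ) :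
    AZ η θ τ q x s (k - 1) • delay v k + BZ η θ τ q x t s k • v k
        + CZ η θ τ q t s (k + 1) • v (k + 1)
      = quadOp η θ τ D (delay v k) + (η * t) • D (v k)
        + (x • 1 - (η * s) • D) (q ^ k • v k + q ^ (k - 1) • delay v k) := by
  rw [AZ_smul_delay, BZ_natCast, CZ_natCast_add_one, bZ_natCast]
  simp only [quadOp, LinearMap.add_apply, LinearMap.sub_apply, LinearMap.smul_apply,
    Module.End.one_apply, map_add, map_smul, hv.apply_delay, hv.sq_apply_delay, hv k]
  module

theorem jacobi_eq_dual_jacobi {v : ℕ → ℕ → ℝ} (hv : IsQLadder q (qAdjacentSum q) v)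
    (hq : q ≠ -1)
    (hv0 : ∀ n : ℕ, x * v 0 n =
      aZ η θ τ q n * v 0 (n + 1) + bZ η θ τ q s n * v 0 n + cZ η τ q s n * v 0 (n - 1))
    (n k : ℕ) :
    aZ η θ τ q n * v k (n + 1) + bZ η θ τ q t n * v k n + cZ η τ q t n * v k (n - 1)
      = AZ η θ τ q x s (k - 1) * delay v k n + BZ η θ τ q x t s k * v k n
        + CZ η θ τ q t s (k + 1) * v (k + 1) n := by
  set D := qAdjacentSum q
  have hreg (k : ℕ) : IsSMulRegular (ℕ → ℝ) (qNum q (k + 1)) :=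
    (geom_sum_ne_zero hq k.succ_ne_zero).isUnit.isSMulRegular _
  have hX : Commute (x • 1 - (η * s) • D) D :=
    ((Commute.one_left D).smul_left x).sub_left ((Commute.refl D).smul_left _)
  have hbase : quadOp η θ τ D (seqShift ℝ (v 0)) = (x • 1 - (η * s) • D) (v 0) :=
    funext fun n => eq_sub_of_add_eq ((jacobi_eq_quadOp η θ τ q s (v 0) n).symm.trans (hv0 n).symm)
  calc
    _ = (quadOp η θ τ D (seqShift ℝ (v k)) + (η * t) • D (v k)) n :=
      jacobi_eq_quadOp η θ τ q t (v k) n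
    _ = (quadOp η θ τ D (delay v k) + (η * t) • D (v k)
          + (x • 1 - (η * s) • D) (q ^ k • v k + q ^ (k - 1) • delay v k)) n := by
      rw [hv.apply_shift (seqShift_mul_qAdjacentSum q) hreg (quadOp_commute η θ τ D) hX hbase k,
        add_right_comm]
    _ = _ := congrFun (hv.dual_jacobi_eq_quadOp t k).symm n

end IsQLadder

end Coefficients

section IntegerFamily

/-- The sequences `v_k = (n ↦ β_{n,k})` of an integer-indexed family, restricted to `n, k ≥ 0` so
that the operators on `ℕ → ℝ` apply; the index `k` comes first. -/
def columns (β : ℤ → ℤ → ℝ) (k n : ℕ) : ℝ := β n k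

variable {q : ℝ} {β : ℤ → ℤ → ℝ}

lemma isQLadder_columns (hzero : ∀ n k : ℤ, n < k → β n k = 0)
    (hrec : ∀ n k : ℤ, 0 ≤ n → 0 ≤ k → qnumZ q (k + 1) * β n (k + 1) =
      q ^ k * qnumZ q (n - k) * β n k + qnumZ q n * β (n - 1) k) :
    IsQLadder q (qAdjacentSum q) (columns β) := by
  refine isQLadder_of_recurrence q (fun n k hnk => hzero n k (by lia)) fun n k hkn => ?_
  have h := hrec n k n.cast_nonneg k.cast_nonneg
  rw [← Nat.cast_sub hkn, ← Nat.cast_succ] at h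
  simp only [qnumZ_natCast, zpow_natCast] at h
  simp only [columns]
  linear_combination h + apply_pred_mul_qNum q (β · k) n

lemma delay_columns_apply {n : ℕ} (hneg : β n (-1) = 0) (k : ℕ) :
    delay (columns β) k n = β n (k - 1) := by
  cases k with
  | zero => simp [hneg]
  | succ k => simp [columns]

end IntegerFamily

theorem stmt16_general (η θ τ q s x : ℝ) (_hq0 : q ≠ 0) (hq : q ≠ -1) (_hη : η ≠ 0)
    (p : ℕ → ℝ)
    (hprec : ∀ n : ℕ, x * p n =
      aZ η θ τ q n * p (n + 1) + bZ η θ τ q s n * p n + cZ η τ q s n * p (n - 1))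
    (β : ℤ → ℤ → ℝ)
    (hzero : ∀ n k : ℤ, n < 0 ∨ k < 0 ∨ n < k → β n k = 0)
    (hinit : ∀ n : ℕ, β n 0 = p n)
    (hrec : ∀ n k : ℤ, 0 ≤ n → 0 ≤ k →
      qnumZ q (k + 1) * β n (k + 1) =
        q ^ k * qnumZ q (n - k) * β n k + qnumZ q n * β (n - 1) k)
    (t : ℝ) (n k : ℤ) (hn : 0 ≤ n) (hk : 0 ≤ k) :
    aZ η θ τ q n * β (n + 1) k + bZ η θ τ q t n * β n k + cZ η τ q t n * β (n - 1) k
      = AZ η θ τ q x s (k - 1) * β n (k - 1) + BZ η θ τ q x t s k * β n k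
        + CZ η θ τ q t s (k + 1) * β n (k + 1) := by
  lift n to ℕ using hn
  lift k to ℕ using hk
  have hv : IsQLadder q (qAdjacentSum q) (columns β) :=
    isQLadder_columns (fun n k hnk => hzero n k (.inr (.inr hnk))) hrec
  have hv0 : columns β 0 = p := funext hinit
  rw [cZ_mul_apply_pred η τ q t (β · k), ← delay_columns_apply (hzero n (-1) (by simp))]
  exact hv.jacobi_eq_dual_jacobi t hq (hv0 ▸ hprec) n k

/-- for `0 < q ≤ 1`, `η > 0`, `θ ≥ 0`, `τ ≥ 0`, `s > 0`, `x ∈ ℝ`, with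
`β_{n,k}(x,s)` defined by the zero conventions, the initial condition `β_{n,0} = p_n(x;s)`
and the recurrence `[k+1]_q β_{n,k+1} = q^k [n-k]_q β_{n,k} + [n]_q β_{n-1,k}`, one has, for
every real `t` and all `0 ≤ k ≤ n`:
`a_n β_{n+1,k} + b_n(t) β_{n,k} + c_n(t) β_{n-1,k}
  = A_{k-1}(x,s) β_{n,k-1} + B_k(x,t,s) β_{n,k} + C_{k+1}(t,s) β_{n,k+1}`. -/
theorem stmt16 (η θ τ q s x : ℝ)
    (hq0 : 0 < q) (hq1 : q ≤ 1) (hη : 0 < η) (hθ : 0 ≤ θ) (hτ : 0 ≤ τ) (hs : 0 < s)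
    (p : ℕ → ℝ)
    (hp0 : p 0 = 1)
    (hprec : ∀ n : ℕ, x * p n =
      aZ η θ τ q n * p (n + 1) + bZ η θ τ q s n * p n + cZ η τ q s n * p (n - 1))
    (β : ℤ → ℤ → ℝ)
    (hzero : ∀ n k : ℤ, n < 0 ∨ k < 0 ∨ n < k → β n k = 0)
    (hinit : ∀ n : ℕ, β n 0 = p n)
    (hrec : ∀ n k : ℤ, 0 ≤ n → 0 ≤ k →
      qnumZ q (k + 1) * β n (k + 1) =
        q ^ k * qnumZ q (n - k) * β n k + qnumZ q n * β (n - 1) k) :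
    ∀ (t : ℝ) (n k : ℤ), 0 ≤ k → k ≤ n →
      aZ η θ τ q n * β (n + 1) k + bZ η θ τ q t n * β n k
          + cZ η τ q t n * β (n - 1) k
        = AZ η θ τ q x s (k - 1) * β n (k - 1) + BZ η θ τ q x t s k * β n k
            + CZ η θ τ q t s (k + 1) * β n (k + 1) :=
  fun t n k hk hkn => stmt16_general η θ τ q s x hq0.ne' (by linarith) hη.ne' p hprec β hzero hinit
    hrec t n k (hk.trans hkn) hk
end
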